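/- Let p ∈ (1, ∞). Write Ω = {(x, y) : x ∈ [a, b], φ₁(x) ≤ y ≤ φ₂(x)} with φ₁ convex and φ₂ concave on [a, b]. Suppose at least one of the two vertical lines of support of Ω is not angular, i.e. φ₂(a) > φ₁(a), or φ₂(b) > φ₁(b), or at least one of the one-sided derivatives φ₂'(a+), −φ₁'(a+), −φ₂'(b−), φ₁'(b−) equals +∞. Then sup{ ‖u_x‖_p / ‖u_y‖_p : u ∈ 𝒰_Ω, u ≢ 0 } = +∞, i.e. for every C > 0 there exists u ∈ 𝒰_Ω with ‖u_x‖_p > C ‖u_y‖_p. -/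

import Mathlib

open Set MeasureTheory
open scoped ENNReal

/-- Partial derivative of `u` in the `x` direction (junk value where `u` is not
differentiable). -/
noncomputable def ux (u : ℝ × ℝ → ℝ) (z : ℝ × ℝ) : ℝ := fderiv ℝ u z (1, 0)

/-- Partial derivative of `u` in the `y` direction. -/
noncomputable def uy (u : ℝ × ℝ → ℝ) (z : ℝ × ℝ) : ℝ := fderiv ℝ u z (0, 1)

/-- Directional derivative of `u` in the direction `h`. -/
noncomputable def uh (h : ℝ × ℝ) (u : ℝ × ℝ → ℝ) (z : ℝ × ℝ) : ℝ := fderiv ℝ u z h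

/-- The class `𝒰_Ω`: continuous concave functions on `Ω` vanishing on the boundary,
with uniformly bounded gradient over all interior points where it exists. -/
def MemU (Ω : Set (ℝ × ℝ)) (u : ℝ × ℝ → ℝ) : Prop :=
  ContinuousOn u Ω ∧ ConcaveOn ℝ Ω u ∧ (∀ z ∈ frontier Ω, u z = 0) ∧
    ∃ C : ℝ, ∀ z ∈ interior Ω, ∀ g : (ℝ × ℝ) →L[ℝ] ℝ, HasFDerivAt u g z → ‖g‖ ≤ C

/-- The `L¹` norm of `f` over `Ω`. -/
noncomputable def L1N (Ω : Set (ℝ × ℝ)) (f : ℝ × ℝ → ℝ) : ℝ := ∫ z in Ω, |f z|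

/-- The `L^p` norm of `f` over `Ω`, `p ∈ [1, ∞)`. -/
noncomputable def LpN (Ω : Set (ℝ × ℝ)) (p : ℝ) (f : ℝ × ℝ → ℝ) : ℝ :=
  (∫ z in Ω, |f z| ^ p) ^ (1 / p)

/-- The `L^∞` norm (essential supremum) of `f` over `Ω`. -/
noncomputable def LinfN (Ω : Set (ℝ × ℝ)) (f : ℝ × ℝ → ℝ) : ℝ≥0∞ :=
  essSup (fun z => ENNReal.ofReal |f z|) (volume.restrict Ω)

/-- The width of `Ω` parallel to the (Euclidean unit) vector `h`: the distance between the
two lines of support of `Ω` parallel to `h`, i.e. the oscillation over `Ω` of the linear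
functional given by the unit normal `(-h.2, h.1)` to `h`. -/
noncomputable def widthPar (Ω : Set (ℝ × ℝ)) (h : ℝ × ℝ) : ℝ :=
  sSup ((fun z : ℝ × ℝ => -h.2 * z.1 + h.1 * z.2) '' Ω) -
    sInf ((fun z : ℝ × ℝ => -h.2 * z.1 + h.1 * z.2) '' Ω)

/-!
Let `P` be an interior point of `Ω` and `Q` a point just outside `Ω`. Consider all affine
functions that are nonnegative on `Ω`, normalised at `P` to the value `1` if they are nonnegative
at `Q` and to a large value `M` if they are nonpositive at `Q`; let `u` be their lower envelope.
It is concave, Lipschitz, and vanishes on the boundary. Functions of the first kind have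
gradients bounded independently of `M`. Functions of the second kind have gradients of size at
least a multiple of `M`, and their linear parts are at least as large on `Ω` as at `Q`. Near the
part of the boundary facing `Q` the first kind is bounded below, so in a layer of thickness of
order `1 / M` only the second kind is active, and the integral of the `p`-th power of the
gradient over the layer is of order `M ^ (p - 1)`, which is unbounded for `p > 1`.

At a nonangular point of support there is a nearly vertical chord. If `Q` is chosen level with
its midpoint, then a linear functional which is minimal at `Q` relative to `Ω` is nearly
horizontal, so `|u_y| ≤ η |u_x|` for functions of the second kind, with `η` as small as desired.
Hence `∫ |u_y| ^ p` is at most a constant plus `η ^ p * ∫ |u_x| ^ p`, whereas `∫ |u_x| ^ p` tends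
to infinity.
-/

open AffineMap (homothety)

section LowerEnvelope

variable {E : Type*} [NormedAddCommGroup E] [NormedSpace ℝ E] {K : Set (E →ᴬ[ℝ] ℝ)}
  {f : E →ᴬ[ℝ] ℝ} {z : E}

/-- The pointwise infimum of a family of continuous affine functions; it is the junk value `0`
at points where the family is not bounded below. -/
noncomputable def lowerEnvelope (K : Set (E →ᴬ[ℝ] ℝ)) (z : E) : ℝ :=
  sInf ((fun f : E →ᴬ[ℝ] ℝ => f z) '' K)

lemma affine_apply_eq_add (f : E →ᴬ[ℝ] ℝ) (z w : E) : f z = f w + f.contLinear (z - w) := by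
  have := f.contLinear_map_vsub z w
  simp only [vsub_eq_sub] at this
  rw [this]; ring

lemma continuous_affine_apply (z : E) : Continuous fun f : E →ᴬ[ℝ] ℝ => f z := by
  have h : Continuous fun f : E →ᴬ[ℝ] ℝ =>
      (ContinuousAffineMap.decompLinearIsometryEquiv ℝ ℝ E ℝ f).1 +
        (ContinuousAffineMap.decompLinearIsometryEquiv ℝ ℝ E ℝ f).2 z := by
    fun_prop
  refine h.congr fun f => ?_
  simp [affine_apply_eq_add f z 0]

lemma lowerEnvelope_le (hK : IsCompact K) (hf : f ∈ K) (z : E) : lowerEnvelope K z ≤ f z :=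
  csInf_le (hK.image (continuous_affine_apply z)).bddBelow (mem_image_of_mem _ hf)

lemma exists_lowerEnvelope_eq (hK : IsCompact K) (hne : K.Nonempty) (z : E) :
    ∃ f ∈ K, lowerEnvelope K z = f z :=
  hK.exists_sInf_image_eq hne (continuous_affine_apply z).continuousOn

lemma concaveOn_lowerEnvelope (hK : IsCompact K) (hne : K.Nonempty) :
    ConcaveOn ℝ univ (lowerEnvelope K) := by
  refine ⟨convex_univ, fun x _ y _ s t hs ht hst => ?_⟩
  obtain ⟨f, hf, heq⟩ := exists_lowerEnvelope_eq hK hne (s • x + t • y)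
  have hcombo : f (s • x + t • y) = s • f x + t • f y :=
    Convex.combo_affine_apply (f := (f : E →ᵃ[ℝ] ℝ)) hst
  rw [heq, hcombo]
  simp only [smul_eq_mul]
  gcongr <;> exact lowerEnvelope_le hK hf _

lemma lipschitzWith_lowerEnvelope (hK : IsCompact K) (hne : K.Nonempty) {L : NNReal}
    (hL : ∀ f ∈ K, ‖f.contLinear‖ ≤ L) : LipschitzWith L (lowerEnvelope K) := by
  refine LipschitzWith.of_le_add_mul L fun x y => ?_
  obtain ⟨f, hf, heq⟩ := exists_lowerEnvelope_eq hK hne y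
  calc lowerEnvelope K x ≤ f x := lowerEnvelope_le hK hf x
    _ = f y + f.contLinear (x - y) := affine_apply_eq_add f x y
    _ ≤ lowerEnvelope K y + L * dist x y := by
      rw [heq, dist_eq_norm]
      gcongr
      exact (le_abs_self _).trans (f.contLinear.le_of_opNorm_le (hL f hf) _)

lemma eq_contLinear_of_hasFDerivAt_lowerEnvelope (hK : IsCompact K) (hf : f ∈ K)
    (heq : lowerEnvelope K z = f z) {g : E →L[ℝ] ℝ} (hg : HasFDerivAt (lowerEnvelope K) g z) :
    g = f.contLinear := by
  have hmin : IsLocalMin (fun w => f w - lowerEnvelope K w) z := by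
    refine Filter.Eventually.of_forall fun w => ?_
    simp only [heq, sub_self, sub_nonneg]
    exact lowerEnvelope_le hK hf w
  exact (sub_eq_zero.1 (hmin.hasFDerivAt_eq_zero (f.hasFDerivAt.sub hg))).symm

end LowerEnvelope

section MeasureTheory

lemma mul_measureReal_le_setIntegral {α : Type*} [MeasurableSpace α] {μ : Measure α} {s t : Set α}
    {f : α → ℝ} {ε : ℝ} (hs : NullMeasurableSet s μ) (hμs : μ s ≠ ∞) (hts : t ⊆ s)
    (hf : IntegrableOn f s μ) (hf0 : 0 ≤ f) (hε : 0 ≤ ε) (h : ∀ᵐ x ∂μ, x ∈ t → ε ≤ f x) :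
    ε * μ.real t ≤ ∫ x in s, f x ∂μ := by
  have hle : μ.real t ≤ (μ.restrict s).real {x | ε ≤ f x} := by
    rw [measureReal_def, measureReal_def, Measure.restrict_apply₀' hs]
    refine ENNReal.toReal_mono (measure_ne_top_of_subset inter_subset_right hμs)
      (measure_mono_ae ?_)
    filter_upwards [h] with x hx hxt using ⟨hx hxt, hts hxt⟩
  exact (mul_le_mul_of_nonneg_left hle hε).trans
    (mul_meas_ge_le_integral_of_nonneg (ae_of_all _ hf0) hf ε)

lemma integrableOn_abs_fderiv_rpow {E : Type*} [NormedAddCommGroup E] [NormedSpace ℝ E]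
    [MeasurableSpace E] [BorelSpace E] {μ : Measure E} {Ω : Set E} {u : E → ℝ} {L : NNReal}
    (hu : LipschitzWith L u) (hΩ : μ Ω ≠ ∞) {p : ℝ} (hp : 0 ≤ p) (v : E) :
    IntegrableOn (fun z => |fderiv ℝ u z v| ^ p) Ω μ := by
  refine Measure.integrableOn_of_bounded (M := (L * ‖v‖) ^ p) hΩ
    ((measurable_fderiv_apply_const ℝ u v).norm.pow_const p).aestronglyMeasurable
    (ae_of_all _ fun z => ?_)
  rw [Real.norm_of_nonneg (by positivity)]
  gcongr
  exact (fderiv ℝ u z).le_of_opNorm_le (norm_fderiv_le_of_lipschitz ℝ hu) v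

lemma mul_measureReal_le_diff_homothety_image {E : Type*} [NormedAddCommGroup E] [NormedSpace ℝ E]
    [FiniteDimensional ℝ E] [Nontrivial E] [MeasurableSpace E] [BorelSpace E] (μ : Measure E)
    [μ.IsAddHaarMeasure] {G : Set E} (hG : μ G ≠ ∞) (P : E) {s : ℝ} (hs0 : 0 ≤ s) (hs1 : s ≤ 1) :
    s * μ.real G ≤ μ.real (G \ homothety P (1 - s) '' G) := by
  have himage : μ.real (homothety P (1 - s) '' G) ≤ (1 - s) * μ.real G := by
    rw [measureReal_def, Measure.addHaar_image_homothety, ENNReal.toReal_mul,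
      ENNReal.toReal_ofReal (abs_nonneg _), abs_of_nonneg (pow_nonneg (sub_nonneg.2 hs1) _)]
    exact mul_le_mul_of_nonneg_right (pow_le_of_le_one (sub_nonneg.2 hs1) (sub_le_self 1 hs0)
      Module.finrank_pos.ne') ENNReal.toReal_nonneg
  have hfin : μ (homothety P (1 - s) '' G) ≠ ∞ := by
    rw [Measure.addHaar_image_homothety]; finiteness
  calc s * μ.real G ≤ μ.real G - μ.real (homothety P (1 - s) '' G) := by linarith
    _ ≤ μ.real (G \ homothety P (1 - s) '' G) := le_measureReal_sdiff hfin

end MeasureTheory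

section NonnegAffine

variable {E : Type*} [NormedAddCommGroup E] [NormedSpace ℝ E] {Ω : Set E} {P Q w : E}
  {f : E →ᴬ[ℝ] ℝ}

lemma affine_apply_homothety (f : E →ᴬ[ℝ] ℝ) (P z : E) (t : ℝ) :
    f (homothety P t z) = (1 - t) * f P + t * f z := by
  rw [AffineMap.homothety_eq_lineMap, f.apply_lineMap, AffineMap.lineMap_apply_ring]

lemma affine_nonneg_of_mem_closure (hf : ∀ z ∈ Ω, 0 ≤ f z) : ∀ z ∈ closure Ω, 0 ≤ f z :=
  closure_minimal hf (isClosed_le continuous_const f.continuous)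

lemma norm_contLinear_le_div {ρ : ℝ} (hρ : 0 < ρ)
    (hf : ∀ z ∈ Metric.closedBall P ρ, 0 ≤ f z) : ‖f.contLinear‖ ≤ f P / ρ := by
  have hP : 0 ≤ f P := hf P (Metric.mem_closedBall_self hρ.le)
  refine ContinuousLinearMap.opNorm_le_of_unit_norm (by positivity) fun x hx => ?_
  have hstep : ∀ s : ℝ, |s| = ρ → 0 ≤ f P + s * f.contLinear x := fun s hs => by
    have h := hf (P + s • x) (by simp [norm_smul, hx, hs])
    rwa [affine_apply_eq_add f _ P, add_sub_cancel_left, map_smul, smul_eq_mul] at h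
  rw [le_div_iff₀ hρ, Real.norm_eq_abs, ← abs_of_pos hρ, ← abs_mul, abs_le]
  constructor
  · linarith [hstep ρ (abs_of_pos hρ)]
  · linarith [hstep (-ρ) (by rw [abs_neg, abs_of_pos hρ])]

lemma contLinear_le_of_apply_nonpos (hf : ∀ z ∈ Ω, 0 ≤ f z) (hQ : f Q ≤ 0) :
    ∀ z ∈ Ω, f.contLinear Q ≤ f.contLinear z := by
  intro z hz
  have h := affine_apply_eq_add f z Q
  rw [map_sub] at h
  linarith [hf z hz]

lemma exists_nonneg_affine_apply_eq_zero (hconv : Convex ℝ Ω) (hP : P ∈ interior Ω)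
    (hw : w ∉ interior Ω) :
    ∃ f : E →ᴬ[ℝ] ℝ, (∀ z ∈ Ω, 0 ≤ f z) ∧ f w = 0 ∧ f P = 1 := by
  obtain ⟨g, hg⟩ := geometric_hahn_banach_open_point hconv.interior isOpen_interior hw
  have hpos : 0 < g w - g P := sub_pos.2 (hg P hP)
  have hle : ∀ z ∈ Ω, g z ≤ g w := fun z hz => by
    have hcl : z ∈ closure (interior Ω) := by
      rw [hconv.closure_interior_eq_closure_of_nonempty_interior ⟨P, hP⟩]
      exact subset_closure hz
    exact closure_minimal (fun a ha => (hg a ha).le)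
      (isClosed_le g.continuous continuous_const) hcl
  refine ⟨(g w - g P)⁻¹ • (ContinuousAffineMap.const ℝ E (g w) - g.toContinuousAffineMap),
    fun z hz => ?_, ?_, ?_⟩
  · have := sub_nonneg.2 (hle z hz)
    simp only [ContinuousAffineMap.smul_apply, ContinuousAffineMap.sub_apply,
      ContinuousAffineMap.coe_const, Function.const_apply,
      ContinuousLinearMap.coe_toContinuousAffineMap, smul_eq_mul]
    positivity
  · simp
  · simp [hpos.ne']

end NonnegAffine

section SupportFamily

variable {E : Type*} [NormedAddCommGroup E] [NormedSpace ℝ E] {Ω : Set E} {P Q w z : E} {M ρ : ℝ}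
  {f : E →ᴬ[ℝ] ℝ}

/-- The affine functions that are nonnegative on `Ω` and normalised at `P`: to `1` if they are
nonnegative at `Q`, and to `M` if they are nonpositive at `Q`. -/
def supportFamily (Ω : Set E) (P Q : E) (M : ℝ) : Set (E →ᴬ[ℝ] ℝ) :=
  {f | (∀ z ∈ Ω, 0 ≤ f z) ∧ (f P = 1 ∧ 0 ≤ f Q ∨ f P = M ∧ f Q ≤ 0)}

/-- The extremal function: the lower envelope of `supportFamily Ω P Q M`. -/
noncomputable abbrev supportEnvelope (Ω : Set E) (P Q : E) (M : ℝ) : E → ℝ :=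
  lowerEnvelope (supportFamily Ω P Q M)

lemma apply_mem_Icc_of_mem_supportFamily (hM : 1 ≤ M) (hf : f ∈ supportFamily Ω P Q M) :
    f P ∈ Icc 1 M := by
  rcases hf.2 with ⟨h, -⟩ | ⟨h, -⟩ <;> rw [h]
  exacts [⟨le_rfl, hM⟩, ⟨hM, le_rfl⟩]

lemma norm_contLinear_le_of_mem_supportFamily (hρ : 0 < ρ) (hball : Metric.closedBall P ρ ⊆ Ω)
    (hM : 1 ≤ M) (hf : f ∈ supportFamily Ω P Q M) : ‖f.contLinear‖ ≤ M / ρ :=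
  (norm_contLinear_le_div hρ fun z hz => hf.1 z (hball hz)).trans <| by
    gcongr; exact (apply_mem_Icc_of_mem_supportFamily hM hf).2

lemma supportFamily_nonempty (Ω : Set E) (P Q : E) (M : ℝ) : (supportFamily Ω P Q M).Nonempty :=
  ⟨ContinuousAffineMap.const ℝ E 1, by simp [supportFamily]⟩

lemma isClosed_supportFamily (Ω : Set E) (P Q : E) (M : ℝ) :
    IsClosed (supportFamily Ω P Q M) := by
  have hcont := continuous_affine_apply (E := E)
  simp only [supportFamily, ofPred_and, ofPred_or, ofPred_forall]
  exact (isClosed_biInter fun z _ => isClosed_le continuous_const (hcont z)).inter <|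
    ((isClosed_eq (hcont P) continuous_const).inter (isClosed_le continuous_const (hcont Q))).union
      ((isClosed_eq (hcont P) continuous_const).inter (isClosed_le (hcont Q) continuous_const))

lemma isCompact_supportFamily [FiniteDimensional ℝ E] (hP : P ∈ interior Ω) (hM : 1 ≤ M) :
    IsCompact (supportFamily Ω P Q M) := by
  obtain ⟨ρ, hρ, hball⟩ := Metric.nhds_basis_closedBall.mem_iff.1 (mem_interior_iff_mem_nhds.1 hP)
  have : FiniteDimensional ℝ (E →ᴬ[ℝ] ℝ) :=
    (ContinuousAffineMap.decompLinearEquiv ℝ ℝ E ℝ).symm.finiteDimensional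
  have : ProperSpace (E →ᴬ[ℝ] ℝ) := FiniteDimensional.proper ℝ _
  refine Metric.isCompact_of_isClosed_isBounded (isClosed_supportFamily Ω P Q M)
    (Metric.isBounded_closedBall (x := 0) (r := M + M / ρ * ‖P‖ + M / ρ) |>.subset fun f hf => ?_)
  have hfP := apply_mem_Icc_of_mem_supportFamily hM hf
  have hlin := norm_contLinear_le_of_mem_supportFamily hρ hball hM hf
  have hzero : ‖f 0‖ ≤ M + M / ρ * ‖P‖ := by
    rw [affine_apply_eq_add f 0 P, zero_sub]
    refine (norm_add_le _ _).trans (add_le_add ?_ ?_)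
    · rw [Real.norm_of_nonneg (by linarith [hfP.1])]; exact hfP.2
    · simpa using f.contLinear.le_of_opNorm_le hlin (-P)
  rw [mem_closedBall_zero_iff, ContinuousAffineMap.norm_def]
  have : 0 ≤ M / ρ * ‖P‖ := by positivity
  exact max_le (by linarith [(norm_nonneg _).trans hlin]) (by linarith)

lemma exists_mem_supportFamily_apply_eq_zero (hconv : Convex ℝ Ω) (hP : P ∈ interior Ω)
    (hw : w ∉ interior Ω) (hM : 0 ≤ M) : ∃ f ∈ supportFamily Ω P Q M, f w = 0 := by
  obtain ⟨f, hf, hfw, hfP⟩ := exists_nonneg_affine_apply_eq_zero hconv hP hw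
  rcases le_total 0 (f Q) with hQ | hQ
  · exact ⟨f, ⟨hf, .inl ⟨hfP, hQ⟩⟩, hfw⟩
  · refine ⟨M • f, ⟨fun z hz => mul_nonneg hM (hf z hz), .inr ⟨?_, ?_⟩⟩, ?_⟩
    · simp [hfP]
    · exact mul_nonpos_of_nonneg_of_nonpos hM hQ
    · simp [hfw]

variable [FiniteDimensional ℝ E]

lemma exists_supportEnvelope_eq (hP : P ∈ interior Ω) (Q : E) (hM : 1 ≤ M) (z : E) :
    ∃ f ∈ supportFamily Ω P Q M, supportEnvelope Ω P Q M z = f z :=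
  exists_lowerEnvelope_eq (isCompact_supportFamily hP hM) (supportFamily_nonempty Ω P Q M) z

lemma exists_lipschitzWith_supportEnvelope (hP : P ∈ interior Ω) (Q : E) (hM : 1 ≤ M) :
    ∃ L : NNReal, LipschitzWith L (supportEnvelope Ω P Q M) := by
  obtain ⟨ρ, hρ, hball⟩ := Metric.nhds_basis_closedBall.mem_iff.1 (mem_interior_iff_mem_nhds.1 hP)
  refine ⟨(M / ρ).toNNReal, lipschitzWith_lowerEnvelope (isCompact_supportFamily hP hM)
    (supportFamily_nonempty Ω P Q M) fun f hf => ?_⟩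
  rw [Real.coe_toNNReal _ (by positivity)]
  exact norm_contLinear_le_of_mem_supportFamily hρ hball hM hf

lemma fderiv_supportEnvelope_eq (hP : P ∈ interior Ω) (hM : 1 ≤ M)
    (hd : DifferentiableAt ℝ (supportEnvelope Ω P Q M) z) (hf : f ∈ supportFamily Ω P Q M)
    (heq : supportEnvelope Ω P Q M z = f z) :
    fderiv ℝ (supportEnvelope Ω P Q M) z = f.contLinear :=
  eq_contLinear_of_hasFDerivAt_lowerEnvelope (isCompact_supportFamily hP hM) hf heq
    hd.hasFDerivAt

lemma supportEnvelope_homothety_le (hconv : Convex ℝ Ω) (hP : P ∈ interior Ω)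
    (hM : 1 ≤ M) (hw : w ∉ interior Ω) {t : ℝ} (ht : t ≤ 1) :
    supportEnvelope Ω P Q M (homothety P t w) ≤ (1 - t) * M := by
  obtain ⟨f, hf, hfw⟩ :=
    exists_mem_supportFamily_apply_eq_zero (Q := Q) hconv hP hw (zero_le_one.trans hM)
  refine (lowerEnvelope_le (isCompact_supportFamily hP hM) hf _).trans ?_
  rw [affine_apply_homothety, hfw, mul_zero, add_zero]
  exact mul_le_mul_of_nonneg_left (apply_mem_Icc_of_mem_supportFamily hM hf).2 (sub_nonneg.2 ht)

lemma supportEnvelope_eq_zero (hconv : Convex ℝ Ω) (hP : P ∈ interior Ω)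
    (hM : 1 ≤ M) (hw : w ∈ frontier Ω) : supportEnvelope Ω P Q M w = 0 := by
  refine le_antisymm ?_ ?_
  · simpa using supportEnvelope_homothety_le (Q := Q) hconv hP hM hw.2 le_rfl
  · obtain ⟨f, hf, heq⟩ := exists_supportEnvelope_eq hP Q hM w
    rw [heq]
    exact affine_nonneg_of_mem_closure hf.1 w hw.1

lemma one_le_supportEnvelope (hP : P ∈ interior Ω) (hM : 1 ≤ M) :
    1 ≤ supportEnvelope Ω P Q M P := by
  obtain ⟨f, hf, heq⟩ := exists_supportEnvelope_eq hP Q hM P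
  exact heq ▸ (apply_mem_Icc_of_mem_supportFamily hM hf).1

end SupportFamily

section ConeOver

variable {E : Type*} [NormedAddCommGroup E] [NormedSpace ℝ E] {Ω W : Set E} {P z : E}

/-- The union of the open rays from `P` through the points of `W`. -/
def coneOver (P : E) (W : Set E) : Set E :=
  {z | ∃ t > (0 : ℝ), homothety P t z ∈ W}

lemma isOpen_coneOver (P : E) (hW : IsOpen W) : IsOpen (coneOver P W) := by
  have h : coneOver P W = ⋃ t > (0 : ℝ), homothety P t ⁻¹' W := by
    ext; simp [coneOver]
  rw [h]
  exact isOpen_biUnion fun t _ => hW.preimage (AffineMap.homothety_continuous P t)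

lemma homothety_mem_coneOver (hz : z ∈ coneOver P W) {t : ℝ} (ht : 0 < t) :
    homothety P t z ∈ coneOver P W := by
  obtain ⟨s, hs, hsz⟩ := hz
  refine ⟨s / t, div_pos hs ht, ?_⟩
  rwa [← AffineMap.homothety_mul_apply, div_mul_cancel₀ _ ht.ne']

lemma interior_inter_coneOver_nonempty (hP : P ∈ interior Ω) (hW : W.Nonempty) :
    (interior Ω ∩ coneOver P W).Nonempty := by
  obtain ⟨w, hw⟩ := hW
  have hlim : Filter.Tendsto (fun t : ℝ => homothety P t w) (nhdsWithin 0 (Ioi 0)) (nhds P) := by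
    have hcont : Continuous fun t : ℝ => homothety P t w := by
      simp only [AffineMap.homothety_eq_lineMap]
      exact AffineMap.lineMap_continuous
    simpa using (hcont.tendsto 0).mono_left nhdsWithin_le_nhds
  obtain ⟨t, htw, ht⟩ :=
    ((hlim.eventually (isOpen_interior.mem_nhds hP)).and self_mem_nhdsWithin).exists
  refine ⟨_, htw, t⁻¹, inv_pos.2 ht, ?_⟩
  rwa [← AffineMap.homothety_mul_apply, inv_mul_cancel₀ (ne_of_gt ht), AffineMap.homothety_one]

lemma one_lt_of_homothety_notMem (hconv : Convex ℝ Ω) (hP : P ∈ Ω) (hz : z ∈ Ω) {t : ℝ}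
    (ht : 0 < t) (h : homothety P t z ∉ Ω) : 1 < t := by
  by_contra! ht1
  rw [AffineMap.homothety_eq_lineMap] at h
  exact h (hconv.lineMap_mem hP hz ⟨ht.le, ht1⟩)

lemma le_affine_apply_of_mem_coneOver {f : E →ᴬ[ℝ] ℝ} (hconv : Convex ℝ Ω) (hP : P ∈ Ω)
    (hdisj : Disjoint W Ω) {τ : ℝ} (hτ : τ ≤ f P) (hf : ∀ w ∈ W, τ ≤ f w) (hz : z ∈ Ω)
    (hzW : z ∈ coneOver P W) : τ ≤ f z := by
  obtain ⟨t, ht, htz⟩ := hzW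
  have ht1 := one_lt_of_homothety_notMem hconv hP hz ht (hdisj.notMem_of_mem_left htz)
  have h := hf _ htz
  rw [affine_apply_homothety] at h
  nlinarith

end ConeOver

section VisibleLayer

variable {E : Type*} [NormedAddCommGroup E] [NormedSpace ℝ E] {Ω : Set E} {P Q : E}

lemma exists_isOpen_forall_le_affine_apply (hP : P ∈ interior Ω) (hQ : Q ∉ closure Ω) :
    ∃ W : Set E, IsOpen W ∧ W.Nonempty ∧ Disjoint W Ω ∧ ∃ τ ∈ Ioo (0 : ℝ) 1,
      ∀ f : E →ᴬ[ℝ] ℝ, (∀ z ∈ Ω, 0 ≤ f z) → f P = 1 → 0 ≤ f Q → ∀ w ∈ W, τ ≤ f w := by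
  obtain ⟨ρ, hρ, hball⟩ := Metric.nhds_basis_closedBall.mem_iff.1 (mem_interior_iff_mem_nhds.1 hP)
  obtain ⟨θ, hθQ, hθ0, hθ1⟩ : ∃ θ : ℝ, AffineMap.lineMap Q P θ ∉ closure Ω ∧ 0 < θ ∧ θ < 1 := by
    have hlim : Filter.Tendsto (AffineMap.lineMap Q P : ℝ → E) (nhdsWithin 0 (Ioi 0))
        (nhds Q) := by
      simpa using (AffineMap.lineMap_continuous (R := ℝ) (p := Q) (q := P)).tendsto 0 |>.mono_left
        nhdsWithin_le_nhds
    exact ((hlim.eventually (isClosed_closure.isOpen_compl.mem_nhds hQ)).and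
      (Ioo_mem_nhdsGT one_pos)).exists
  -- `Q'` lies on the segment from `Q` to `P`, still outside `Ω`.
  set Q' : E := AffineMap.lineMap Q P θ
  refine ⟨Metric.ball Q' (ρ * θ / 2) ∩ (closure Ω)ᶜ,
    Metric.isOpen_ball.inter isClosed_closure.isOpen_compl,
    ⟨Q', Metric.mem_ball_self (by positivity), hθQ⟩,
    disjoint_left.2 fun w hw hwΩ => hw.2 (subset_closure hwΩ), θ / 2,
    ⟨by linarith, by linarith⟩, fun f hf hfP hfQ w hw => ?_⟩
  have hfQ' : θ ≤ f Q' := by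
    rw [f.apply_lineMap, AffineMap.lineMap_apply_ring, hfP]
    nlinarith
  have hdiff : |f.contLinear (w - Q')| ≤ θ / 2 := by
    have hlin := norm_contLinear_le_div hρ fun z hz => hf z (hball hz)
    have hw' : ‖w - Q'‖ ≤ ρ * θ / 2 := mem_ball_iff_norm.1 hw.1 |>.le
    calc |f.contLinear (w - Q')| ≤ f P / ρ * (ρ * θ / 2) :=
          f.contLinear.le_of_opNorm_le_of_le hlin hw'
      _ = θ / 2 := by rw [hfP]; field_simp
  rw [affine_apply_eq_add f w Q']
  linarith [neg_abs_le (f.contLinear (w - Q'))]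

/-- The points of `Ω` at which `supportEnvelope Ω P Q M` is attained only by functions that are
nonpositive at `Q` (and hence take the value `M` at `P`). -/
def visibleLayer (Ω : Set E) (P Q : E) (M : ℝ) : Set E :=
  {z ∈ Ω | ∀ f ∈ supportFamily Ω P Q M,
    supportEnvelope Ω P Q M z = f z → f P = M ∧ f Q ≤ 0}

variable [FiniteDimensional ℝ E]

lemma diff_homothety_image_subset_visibleLayer (hconv : Convex ℝ Ω) (hP : P ∈ interior Ω)
    {W : Set E} (hdisj : Disjoint W Ω) {τ : ℝ} (hτ : τ ≤ 1)
    (hle : ∀ f : E →ᴬ[ℝ] ℝ, (∀ z ∈ Ω, 0 ≤ f z) → f P = 1 → 0 ≤ f Q → ∀ w ∈ W, τ ≤ f w)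
    {M s : ℝ} (hM : 1 ≤ M) (hs0 : 0 ≤ s) (hs1 : s < 1) (hsM : s * M < τ) :
    (Ω ∩ coneOver P W) \ homothety P (1 - s) '' (Ω ∩ coneOver P W) ⊆ visibleLayer Ω P Q M := by
  rintro z ⟨⟨hzΩ, hzW⟩, hzim⟩
  refine ⟨hzΩ, fun f hf heq => hf.2.resolve_left fun ⟨hfP, hfQ⟩ => ?_⟩
  have hs : 0 < 1 - s := sub_pos.2 hs1
  have hback : homothety P (1 - s) (homothety P (1 - s)⁻¹ z) = z := by
    rw [← AffineMap.homothety_mul_apply, mul_inv_cancel₀ hs.ne', AffineMap.homothety_one,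
      AffineMap.id_apply]
  have hout : homothety P (1 - s)⁻¹ z ∉ interior Ω := fun h =>
    hzim ⟨_, ⟨interior_subset h, homothety_mem_coneOver hzW (inv_pos.2 hs)⟩, hback⟩
  have hupper := supportEnvelope_homothety_le (Q := Q) hconv hP hM hout
    (sub_le_self 1 hs0)
  rw [hback, heq] at hupper
  have hlower : τ ≤ f z := le_affine_apply_of_mem_coneOver hconv (interior_subset hP) hdisj
    (hτ.trans hfP.ge) (hle f hf.1 hfP hfQ) hzΩ hzW
  linarith

variable [MeasurableSpace E] [BorelSpace E] (μ : Measure E) [μ.IsAddHaarMeasure]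

lemma exists_div_le_measureReal_visibleLayer (hconv : Convex ℝ Ω) (hΩ : μ Ω ≠ ∞)
    (hP : P ∈ interior Ω) (hQ : Q ∉ closure Ω) :
    ∃ c > 0, ∀ M ≥ 1, c / M ≤ μ.real (visibleLayer Ω P Q M) := by
  obtain ⟨W, hWo, hWne, hdisj, τ, ⟨hτ0, hτ1⟩, hle⟩ := exists_isOpen_forall_le_affine_apply hP hQ
  have : Nontrivial E := ⟨P, Q, fun h => hQ (h ▸ subset_closure (interior_subset hP))⟩
  set G := Ω ∩ coneOver P W
  have hGfin : μ G ≠ ∞ := measure_ne_top_of_subset inter_subset_left hΩ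
  have hGpos : 0 < μ.real G := by
    refine ENNReal.toReal_pos (ne_of_gt ?_) hGfin
    exact ((isOpen_interior.inter (isOpen_coneOver P hWo)).measure_pos μ
      (interior_inter_coneOver_nonempty hP hWne)).trans_le
        (measure_mono (inter_subset_inter_left _ interior_subset))
  refine ⟨τ / 2 * μ.real G, by positivity, fun M hM => ?_⟩
  have : 0 < M := one_pos.trans_le hM
  have hs1 : τ / (2 * M) < 1 := by rw [div_lt_one (by positivity)]; linarith
  have hsM : τ / (2 * M) * M < τ := by
    rw [div_mul_eq_mul_div, div_lt_iff₀ (by positivity)]; nlinarith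
  calc τ / 2 * μ.real G / M
      = τ / (2 * M) * μ.real G := by field_simp
    _ ≤ μ.real (G \ homothety P (1 - τ / (2 * M)) '' G) :=
      mul_measureReal_le_diff_homothety_image μ hGfin P (by positivity) hs1.le
    _ ≤ μ.real (visibleLayer Ω P Q M) :=
      measureReal_mono (diff_homothety_image_subset_visibleLayer hconv hP hdisj hτ1.le hle hM
        (by positivity) hs1 hsM) (measure_ne_top_of_subset (sep_subset _ _) hΩ)

end VisibleLayer

section IntegralEstimates

variable {E : Type*} [NormedAddCommGroup E] [NormedSpace ℝ E] [FiniteDimensional ℝ E]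
  {Ω : Set E} {P Q v w z : E} {M ρ η κ p : ℝ}

lemma abs_fderiv_supportEnvelope_le (hP : P ∈ interior Ω) (hρ : 0 < ρ)
    (hball : Metric.closedBall P ρ ⊆ Ω) (hM : 1 ≤ M)
    (hη : ∀ g : E →L[ℝ] ℝ, (∀ z ∈ Ω, g Q ≤ g z) → |g w| ≤ η * |g v|)
    (hd : DifferentiableAt ℝ (supportEnvelope Ω P Q M) z) :
    |fderiv ℝ (supportEnvelope Ω P Q M) z w| ≤ ‖w‖ / ρ ∨
      |fderiv ℝ (supportEnvelope Ω P Q M) z w| ≤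
        η * |fderiv ℝ (supportEnvelope Ω P Q M) z v| := by
  obtain ⟨f, hf, heq⟩ := exists_supportEnvelope_eq hP Q hM z
  rw [fderiv_supportEnvelope_eq hP hM hd hf heq]
  rcases hf.2 with ⟨hfP, -⟩ | ⟨-, hfQ⟩
  · have hlin := norm_contLinear_le_div hρ fun z hz => hf.1 z (hball hz)
    rw [hfP] at hlin
    exact .inl ((f.contLinear.le_of_opNorm_le hlin w).trans_eq (one_div_mul_eq_div _ _))
  · exact .inr (hη _ (contLinear_le_of_apply_nonpos hf.1 hfQ))

lemma le_abs_fderiv_of_mem_visibleLayer (hP : P ∈ interior Ω) (hM : 1 ≤ M)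
    (hκ : ∀ g : E →L[ℝ] ℝ, (∀ z ∈ Ω, g Q ≤ g z) → ‖g‖ ≤ κ * |g v|)
    (hz : z ∈ visibleLayer Ω P Q M) (hd : DifferentiableAt ℝ (supportEnvelope Ω P Q M) z) :
    M ≤ κ * ‖P - Q‖ * |fderiv ℝ (supportEnvelope Ω P Q M) z v| := by
  obtain ⟨f, hf, heq⟩ := exists_supportEnvelope_eq hP Q hM z
  obtain ⟨hfP, hfQ⟩ := hz.2 f hf heq
  rw [fderiv_supportEnvelope_eq hP hM hd hf heq]
  calc M ≤ f.contLinear (P - Q) := by linarith [affine_apply_eq_add f P Q]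
    _ ≤ κ * |f.contLinear v| * ‖P - Q‖ := (le_abs_self _).trans <|
      f.contLinear.le_of_opNorm_le (hκ _ (contLinear_le_of_apply_nonpos hf.1 hfQ)) _
    _ = κ * ‖P - Q‖ * |f.contLinear v| := by ring

variable [MeasurableSpace E] [BorelSpace E] {μ : Measure E} [μ.IsAddHaarMeasure]

lemma setIntegral_abs_fderiv_supportEnvelope_le (hΩ : μ Ω ≠ ∞)
    (hP : P ∈ interior Ω) (hρ : 0 < ρ) (hball : Metric.closedBall P ρ ⊆ Ω) (hM : 1 ≤ M)
    (hp : 0 ≤ p) (hη0 : 0 ≤ η)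
    (hη : ∀ g : E →L[ℝ] ℝ, (∀ z ∈ Ω, g Q ≤ g z) → |g w| ≤ η * |g v|) :
    ∫ z in Ω, |fderiv ℝ (supportEnvelope Ω P Q M) z w| ^ p ∂μ ≤
      (‖w‖ / ρ) ^ p * μ.real Ω +
        η ^ p * ∫ z in Ω, |fderiv ℝ (supportEnvelope Ω P Q M) z v| ^ p ∂μ := by
  obtain ⟨L, hL⟩ := exists_lipschitzWith_supportEnvelope hP Q hM
  have hint := integrableOn_abs_fderiv_rpow hL hΩ hp
  have hconst : IntegrableOn (fun _ => (‖w‖ / ρ) ^ p) Ω μ := integrableOn_const hΩ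
  calc ∫ z in Ω, |fderiv ℝ (supportEnvelope Ω P Q M) z w| ^ p ∂μ
      ≤ ∫ z in Ω, ((‖w‖ / ρ) ^ p +
          η ^ p * |fderiv ℝ (supportEnvelope Ω P Q M) z v| ^ p) ∂μ := by
        refine integral_mono_ae (hint w) (hconst.add ((hint v).const_mul _))
          (ae_restrict_of_ae ?_)
        filter_upwards [hL.ae_differentiableAt] with z hd
        rcases abs_fderiv_supportEnvelope_le hP hρ hball hM hη hd with h | h
        · exact (Real.rpow_le_rpow (abs_nonneg _) h hp).trans
            (le_add_of_nonneg_right (by positivity))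
        · rw [← Real.mul_rpow hη0 (abs_nonneg _)]
          exact (Real.rpow_le_rpow (abs_nonneg _) h hp).trans
            (le_add_of_nonneg_left (by positivity))
    _ = (‖w‖ / ρ) ^ p * μ.real Ω +
          η ^ p * ∫ z in Ω, |fderiv ℝ (supportEnvelope Ω P Q M) z v| ^ p ∂μ := by
        rw [integral_add hconst ((hint v).const_mul _), setIntegral_const, smul_eq_mul, mul_comm,
          integral_const_mul]

lemma exists_mul_rpow_le_setIntegral_supportEnvelope (hconv : Convex ℝ Ω) (hΩ : μ Ω ≠ ∞)
    (hP : P ∈ interior Ω) (hQ : Q ∉ closure Ω) (hp : 0 ≤ p) (hκ0 : 0 < κ)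
    (hκ : ∀ g : E →L[ℝ] ℝ, (∀ z ∈ Ω, g Q ≤ g z) → ‖g‖ ≤ κ * |g v|) :
    ∃ c > 0, ∀ M ≥ 1, c * M ^ (p - 1) ≤
      ∫ z in Ω, |fderiv ℝ (supportEnvelope Ω P Q M) z v| ^ p ∂μ := by
  obtain ⟨c, hc, hlayer⟩ := exists_div_le_measureReal_visibleLayer μ hconv hΩ hP hQ
  have hPQ : P ≠ Q := fun h => hQ (h ▸ subset_closure (interior_subset hP))
  have hN : 0 < κ * ‖P - Q‖ := mul_pos hκ0 (norm_sub_pos_iff.2 hPQ)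
  refine ⟨c / (κ * ‖P - Q‖) ^ p, by positivity, fun M hM => ?_⟩
  have hM0 : 0 < M := one_pos.trans_le hM
  obtain ⟨L, hL⟩ := exists_lipschitzWith_supportEnvelope hP Q hM
  have hlarge : ∀ᵐ z ∂μ, z ∈ visibleLayer Ω P Q M →
      (M / (κ * ‖P - Q‖)) ^ p ≤ |fderiv ℝ (supportEnvelope Ω P Q M) z v| ^ p := by
    filter_upwards [hL.ae_differentiableAt] with z hd hz
    gcongr
    exact (div_le_iff₀' hN).2 (le_abs_fderiv_of_mem_visibleLayer hP hM hκ hz hd)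
  calc c / (κ * ‖P - Q‖) ^ p * M ^ (p - 1)
      = (M / (κ * ‖P - Q‖)) ^ p * (c / M) := by
        rw [Real.div_rpow hM0.le hN.le, Real.rpow_sub_one hM0.ne']; ring
    _ ≤ (M / (κ * ‖P - Q‖)) ^ p * μ.real (visibleLayer Ω P Q M) := by
        gcongr; exact hlayer M hM
    _ ≤ ∫ z in Ω, |fderiv ℝ (supportEnvelope Ω P Q M) z v| ^ p ∂μ :=
        mul_measureReal_le_setIntegral (hconv.nullMeasurableSet μ) hΩ (sep_subset _ _)
          (integrableOn_abs_fderiv_rpow hL hΩ hp v) (fun z => by positivity) (by positivity) hlarge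

lemma exists_rpow_mul_setIntegral_lt_supportEnvelope (hconv : Convex ℝ Ω) (hΩ : μ Ω ≠ ∞)
    (hP : P ∈ interior Ω) (hQ : Q ∉ closure Ω) (hp : 1 < p) (hκ0 : 0 < κ)
    (hκ : ∀ g : E →L[ℝ] ℝ, (∀ z ∈ Ω, g Q ≤ g z) → ‖g‖ ≤ κ * |g v|) (hη0 : 0 ≤ η)
    (hη : ∀ g : E →L[ℝ] ℝ, (∀ z ∈ Ω, g Q ≤ g z) → |g w| ≤ η * |g v|)
    {C : ℝ} (hC : 0 ≤ C) (hCη : C * η < 1) :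
    ∃ M ≥ 1, C ^ p * ∫ z in Ω, |fderiv ℝ (supportEnvelope Ω P Q M) z w| ^ p ∂μ <
      ∫ z in Ω, |fderiv ℝ (supportEnvelope Ω P Q M) z v| ^ p ∂μ := by
  have hp0 : 0 < p := one_pos.trans hp
  obtain ⟨ρ, hρ, hball⟩ := Metric.nhds_basis_closedBall.mem_iff.1 (mem_interior_iff_mem_nhds.1 hP)
  obtain ⟨c, hc, hlower⟩ :=
    exists_mul_rpow_le_setIntegral_supportEnvelope (p := p) hconv hΩ hP hQ hp0.le hκ0 hκ
  have hgap : 0 < 1 - (C * η) ^ p :=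
    sub_pos.2 (Real.rpow_lt_one (mul_nonneg hC hη0) hCη hp0)
  obtain ⟨M, hlarge, hM⟩ : ∃ M : ℝ, C ^ p * ((‖w‖ / ρ) ^ p * μ.real Ω) <
      (1 - (C * η) ^ p) * (c * M ^ (p - 1)) ∧ 1 ≤ M :=
    ((((tendsto_rpow_atTop (sub_pos.2 hp)).const_mul_atTop hc).const_mul_atTop hgap
      |>.eventually_gt_atTop _).and (Filter.eventually_ge_atTop 1)).exists
  refine ⟨M, hM, ?_⟩
  have hupper := setIntegral_abs_fderiv_supportEnvelope_le (μ := μ) hΩ hP hρ hball hM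
    hp0.le hη0 hη
  set I := ∫ z in Ω, |fderiv ℝ (supportEnvelope Ω P Q M) z v| ^ p ∂μ
  calc C ^ p * ∫ z in Ω, |fderiv ℝ (supportEnvelope Ω P Q M) z w| ^ p ∂μ
      ≤ C ^ p * ((‖w‖ / ρ) ^ p * μ.real Ω + η ^ p * I) := by gcongr
    _ = C ^ p * ((‖w‖ / ρ) ^ p * μ.real Ω) + (C * η) ^ p * I := by
      rw [Real.mul_rpow hC hη0]; ring
    _ < (1 - (C * η) ^ p) * (c * M ^ (p - 1)) + (C * η) ^ p * I := by gcongr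
    _ ≤ (1 - (C * η) ^ p) * I + (C * η) ^ p * I := by gcongr; exact hlower M hM
    _ = I := by ring

end IntegralEstimates

section Plane

variable {Ω : Set (ℝ × ℝ)} {η : ℝ}

lemma memU_of_lipschitzWith {u : ℝ × ℝ → ℝ} {L : NNReal} (hu : LipschitzWith L u)
    (hconc : ConcaveOn ℝ Ω u) (hzero : ∀ z ∈ frontier Ω, u z = 0) : MemU Ω u :=
  ⟨hu.continuous.continuousOn, hconc, hzero, L, fun _ _ _ hg => hg.le_of_lipschitz hu⟩

lemma mul_LpN_lt_LpN {p C : ℝ} {f g : ℝ × ℝ → ℝ} (hp : 0 < p) (hC : 0 ≤ C)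
    (h : C ^ p * ∫ z in Ω, |f z| ^ p < ∫ z in Ω, |g z| ^ p) : C * LpN Ω p f < LpN Ω p g := by
  have hf : 0 ≤ ∫ z in Ω, |f z| ^ p := integral_nonneg fun z => by positivity
  calc C * LpN Ω p f = (C ^ p * ∫ z in Ω, |f z| ^ p) ^ (1 / p) := by
        rw [Real.mul_rpow (by positivity) hf, ← Real.rpow_mul hC, mul_one_div_cancel hp.ne',
          Real.rpow_one, LpN]
    _ < LpN Ω p g := Real.rpow_lt_rpow (by positivity) h (by positivity)

lemma apply_eq_fst_mul_add_snd_mul (g : ℝ × ℝ →L[ℝ] ℝ) (z : ℝ × ℝ) :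
    g z = z.1 * g (1, 0) + z.2 * g (0, 1) := by
  conv_lhs => rw [show z = z.1 • (1, 0) + z.2 • (0, 1) by ext <;> simp]
  rw [map_add, map_smul, map_smul, smul_eq_mul, smul_eq_mul]

lemma norm_le_one_add_mul_abs {g : ℝ × ℝ →L[ℝ] ℝ} (hη : 0 ≤ η)
    (hg : |g (0, 1)| ≤ η * |g (1, 0)|) : ‖g‖ ≤ (1 + η) * |g (1, 0)| := by
  refine g.opNorm_le_bound (by positivity) fun z => ?_
  calc ‖g z‖ ≤ |z.1| * |g (1, 0)| + |z.2| * |g (0, 1)| := by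
        rw [apply_eq_fst_mul_add_snd_mul, Real.norm_eq_abs, ← abs_mul, ← abs_mul]
        exact abs_add_le _ _
    _ ≤ ‖z‖ * |g (1, 0)| + ‖z‖ * (η * |g (1, 0)|) := by
        gcongr
        exacts [norm_fst_le z, norm_snd_le z]
    _ = (1 + η) * |g (1, 0)| * ‖z‖ := by ring

lemma abs_apply_le_of_nonneg_of_nonneg {g : ℝ × ℝ →L[ℝ] ℝ} {r s t : ℝ} (ht : t ≠ 0)
    (hr : |r| ≤ η * |t|) (hs : |s| ≤ η * |t|) (hrt : 0 ≤ g (r, t)) (hst : 0 ≤ g (s, -t)) :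
    |g (0, 1)| ≤ η * |g (1, 0)| := by
  have hbound : ∀ q : ℝ, |q| ≤ η * |t| → q * g (1, 0) ≤ |t| * (η * |g (1, 0)|) := fun q hq =>
    calc q * g (1, 0) ≤ |q| * |g (1, 0)| := by rw [← abs_mul]; exact le_abs_self _
      _ ≤ η * |t| * |g (1, 0)| := by gcongr
      _ = |t| * (η * |g (1, 0)|) := by ring
  rw [apply_eq_fst_mul_add_snd_mul] at hrt hst
  refine le_of_mul_le_mul_left ?_ (abs_pos.2 ht)
  rw [← abs_mul, abs_le]
  constructor
  · linarith [hbound r hr]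
  · linarith [hbound s hs]

/-- A point `ξ` of the closure of `Ω` through which there is a vertical line of support of `Ω`
that is not angular: chords of `Ω` starting at `ξ` come arbitrarily close to the vertical. -/
structure IsNonangularVerticalSupport (Ω : Set (ℝ × ℝ)) (ξ : ℝ × ℝ) : Prop where
  mem_closure : ξ ∈ closure Ω
  side : (∀ z ∈ Ω, ξ.1 ≤ z.1) ∨ ∀ z ∈ Ω, z.1 ≤ ξ.1
  steep : ∀ K : ℝ, ∃ z ∈ Ω, K * |z.1 - ξ.1| < |z.2 - ξ.2|

lemma IsNonangularVerticalSupport.exists_notMem_closure {ξ : ℝ × ℝ}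
    (hξ : IsNonangularVerticalSupport Ω ξ) {δ : ℝ} (hδ : 0 < δ) (y : ℝ) :
    ∃ x, |ξ.1 - x| = δ ∧ (x, y) ∉ closure Ω := by
  rcases hξ.side with h | h
  · refine ⟨ξ.1 - δ, by simp [abs_of_pos hδ], fun hmem => ?_⟩
    have : ξ.1 ≤ ξ.1 - δ := closure_minimal h (isClosed_le continuous_const continuous_fst) hmem
    linarith
  · refine ⟨ξ.1 + δ, by simp [abs_of_pos hδ], fun hmem => ?_⟩
    have : ξ.1 + δ ≤ ξ.1 := closure_minimal h (isClosed_le continuous_fst continuous_const) hmem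
    linarith

lemma IsNonangularVerticalSupport.exists_forall_abs_apply_le {ξ : ℝ × ℝ}
    (hξ : IsNonangularVerticalSupport Ω ξ) (hη : 0 < η) :
    ∃ Q ∉ closure Ω, ∀ g : ℝ × ℝ →L[ℝ] ℝ, (∀ z ∈ Ω, g Q ≤ g z) →
      |g (0, 1)| ≤ η * |g (1, 0)| := by
  obtain ⟨B, hB, hsteep⟩ := hξ.steep (4 / η)
  set t := (B.2 - ξ.2) / 2 with ht
  have hBt : |B.2 - ξ.2| = 2 * |t| := by rw [ht, abs_div, abs_two]; ring
  have hBξ : |B.1 - ξ.1| < η * |t| / 2 := by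
    rw [hBt, div_mul_eq_mul_div, div_lt_iff₀ hη] at hsteep
    linarith
  have ht0 : 0 < |t| := pos_of_mul_pos_right (by linarith [abs_nonneg (B.1 - ξ.1)]) hη.le
  -- `Q` lies just outside `Ω`, level with the midpoint of the steep chord from `ξ` to `B`.
  obtain ⟨x, hx, hQ⟩ := hξ.exists_notMem_closure (δ := η * |t| / 2) (by positivity) (ξ.2 + t)
  refine ⟨(x, ξ.2 + t), hQ, fun g hg => ?_⟩
  have hgξ : g (x, ξ.2 + t) ≤ g ξ :=
    closure_minimal hg (isClosed_le continuous_const g.continuous) hξ.mem_closure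
  refine abs_apply_le_of_nonneg_of_nonneg (r := B.1 - x) (s := ξ.1 - x) (abs_pos.1 ht0)
    ?_ (by linarith [mul_pos hη ht0]) ?_ ?_
  · linarith [abs_sub_le B.1 ξ.1 x]
  · have : (B.1 - x, t) = B - (x, ξ.2 + t) := by ext <;> simp [ht]; ring
    rw [this, map_sub]
    exact sub_nonneg.2 (hg B hB)
  · have : (ξ.1 - x, -t) = ξ - (x, ξ.2 + t) := by ext <;> simp
    rw [this, map_sub]
    exact sub_nonneg.2 hgξ

end Plane

section GraphRegion

variable {a b : ℝ} {φ₁ φ₂ : ℝ → ℝ}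

lemma convex_setOf_mem_Icc_apply (hφ₁ : ConvexOn ℝ (Icc a b) φ₁)
    (hφ₂ : ConcaveOn ℝ (Icc a b) φ₂) :
    Convex ℝ {z : ℝ × ℝ | z.1 ∈ Icc a b ∧ z.2 ∈ Icc (φ₁ z.1) (φ₂ z.1)} := by
  convert hφ₁.convex_epigraph.inter hφ₂.convex_hypograph using 1
  ext z
  simp only [mem_inter_iff, mem_ofPred_eq, mem_Icc]
  tauto

lemma isNonangularVerticalSupport_of_graph {Ω : Set (ℝ × ℝ)} {s : Set ℝ} {φ : ℝ → ℝ} {e : ℝ}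
    (hgraph : ∀ x ∈ s, (x, φ x) ∈ Ω) (he : e ∈ s)
    (hside : (∀ z ∈ Ω, e ≤ z.1) ∨ ∀ z ∈ Ω, z.1 ≤ e)
    (hslope : ∀ K : ℝ, ∃ x ∈ s, x ≠ e ∧ K < |(φ x - φ e) / (x - e)|) :
    IsNonangularVerticalSupport Ω (e, φ e) := by
  refine ⟨subset_closure (hgraph e he), hside, fun K => ?_⟩
  obtain ⟨x, hx, hxe, hK⟩ := hslope K
  refine ⟨(x, φ x), hgraph x hx, ?_⟩
  rwa [abs_div, lt_div_iff₀ (abs_pos.2 (sub_ne_zero.2 hxe))] at hK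

lemma isNonangularVerticalSupport_of_lt {Ω : Set (ℝ × ℝ)} {e c d : ℝ} (hc : (e, c) ∈ Ω)
    (hd : (e, d) ∈ Ω) (hcd : c < d) (hside : (∀ z ∈ Ω, e ≤ z.1) ∨ ∀ z ∈ Ω, z.1 ≤ e) :
    IsNonangularVerticalSupport Ω (e, c) :=
  ⟨subset_closure hc, hside, fun K => ⟨(e, d), hd, by simpa [sub_eq_zero] using hcd.ne'⟩⟩

lemma exists_isNonangularVerticalSupport (hab : a < b) (hφle : ∀ x ∈ Icc a b, φ₁ x ≤ φ₂ x)
    (hnotang :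
      φ₁ a < φ₂ a ∨ φ₁ b < φ₂ b ∨
      (∀ C : ℝ, ∃ x ∈ Ioc a b, C < (φ₂ x - φ₂ a) / (x - a)) ∨
      (∀ C : ℝ, ∃ x ∈ Ioc a b, (φ₁ x - φ₁ a) / (x - a) < C) ∨
      (∀ C : ℝ, ∃ x ∈ Ico a b, (φ₂ b - φ₂ x) / (b - x) < C) ∨
      (∀ C : ℝ, ∃ x ∈ Ico a b, C < (φ₁ b - φ₁ x) / (b - x))) :
    ∃ ξ, IsNonangularVerticalSupport
      {z : ℝ × ℝ | z.1 ∈ Icc a b ∧ z.2 ∈ Icc (φ₁ z.1) (φ₂ z.1)} ξ := by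
  set Ω := {z : ℝ × ℝ | z.1 ∈ Icc a b ∧ z.2 ∈ Icc (φ₁ z.1) (φ₂ z.1)}
  have hlow : ∀ x ∈ Icc a b, (x, φ₁ x) ∈ Ω := fun x hx => ⟨hx, le_rfl, hφle x hx⟩
  have hupp : ∀ x ∈ Icc a b, (x, φ₂ x) ∈ Ω := fun x hx => ⟨hx, hφle x hx, le_rfl⟩
  have hleft : ∀ z ∈ Ω, a ≤ z.1 := fun z hz => hz.1.1
  have hright : ∀ z ∈ Ω, z.1 ≤ b := fun z hz => hz.1.2
  have ha : a ∈ Icc a b := left_mem_Icc.2 hab.le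
  have hb : b ∈ Icc a b := right_mem_Icc.2 hab.le
  have hswap : ∀ (φ : ℝ → ℝ) (x : ℝ), (φ b - φ x) / (b - x) = (φ x - φ b) / (x - b) :=
    fun φ x => by rw [← neg_sub (φ x), ← neg_sub x, neg_div_neg_eq]
  simp only [hswap] at hnotang
  rcases hnotang with h | h | h | h | h | h
  · exact ⟨_, isNonangularVerticalSupport_of_lt (hlow a ha) (hupp a ha) h (.inl hleft)⟩
  · exact ⟨_, isNonangularVerticalSupport_of_lt (hlow b hb) (hupp b hb) h (.inr hright)⟩
  · refine ⟨_, isNonangularVerticalSupport_of_graph hupp ha (.inl hleft) fun K => ?_⟩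
    obtain ⟨x, hx, hK⟩ := h K
    exact ⟨x, Ioc_subset_Icc_self hx, hx.1.ne', lt_abs.2 (.inl hK)⟩
  · refine ⟨_, isNonangularVerticalSupport_of_graph hlow ha (.inl hleft) fun K => ?_⟩
    obtain ⟨x, hx, hK⟩ := h (-K)
    exact ⟨x, Ioc_subset_Icc_self hx, hx.1.ne', lt_abs.2 (.inr (lt_neg_of_lt_neg hK))⟩
  · refine ⟨_, isNonangularVerticalSupport_of_graph hupp hb (.inr hright) fun K => ?_⟩
    obtain ⟨x, hx, hK⟩ := h (-K)
    exact ⟨x, Ico_subset_Icc_self hx, hx.2.ne, lt_abs.2 (.inr (lt_neg_of_lt_neg hK))⟩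
  · refine ⟨_, isNonangularVerticalSupport_of_graph hlow hb (.inr hright) fun K => ?_⟩
    obtain ⟨x, hx, hK⟩ := h K
    exact ⟨x, Ico_subset_Icc_self hx, hx.2.ne, lt_abs.2 (.inl hK)⟩

end GraphRegion

theorem stmt_12_general {p : ℝ} (hp : 1 < p) {Ω : Set (ℝ × ℝ)} (hconv : Convex ℝ Ω)
    (hint : (interior Ω).Nonempty) (hvol : volume Ω ≠ ∞) {ξ : ℝ × ℝ}
    (hξ : IsNonangularVerticalSupport Ω ξ) :
    ∀ C > (0 : ℝ), ∃ u : ℝ × ℝ → ℝ, MemU Ω u ∧ (∃ z ∈ Ω, u z ≠ 0) ∧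
      C * LpN Ω p (uy u) < LpN Ω p (ux u) := by
  intro C hC
  obtain ⟨P, hP⟩ := hint
  obtain ⟨Q, hQ, hη⟩ := hξ.exists_forall_abs_apply_le (η := 1 / (2 * C)) (by positivity)
  obtain ⟨M, hM, hlt⟩ := exists_rpow_mul_setIntegral_lt_supportEnvelope (μ := volume) hconv hvol hP
    hQ hp (by positivity) (fun g hg => norm_le_one_add_mul_abs (by positivity) (hη g hg))
    (by positivity) hη hC.le (by field_simp; norm_num)
  obtain ⟨L, hL⟩ := exists_lipschitzWith_supportEnvelope hP Q hM
  refine ⟨supportEnvelope Ω P Q M, memU_of_lipschitzWith hL ?_ ?_,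
    ⟨P, interior_subset hP, ?_⟩, mul_LpN_lt_LpN (one_pos.trans hp) hC.le hlt⟩
  · exact (concaveOn_lowerEnvelope (isCompact_supportFamily hP hM)
      (supportFamily_nonempty Ω P Q M)).subset (subset_univ Ω) hconv
  · exact fun z hz => supportEnvelope_eq_zero hconv hP hM hz
  · exact (one_pos.trans_le (one_le_supportEnvelope hP hM)).ne'

/-- Theorem 6, necessity: `p ∈ (1, ∞)`; if at least one vertical line of
support of `Ω = {(x,y) : x ∈ [a,b], φ₁(x) ≤ y ≤ φ₂(x)}` is not angular (positive gap at
an endpoint, or an infinite one-sided derivative, expressed via unbounded difference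
quotients), then `K_p(Ω) = ∞`: for every `C > 0` there is a nonzero `u ∈ 𝒰_Ω` with
`‖u_x‖_p > C ‖u_y‖_p`. -/
theorem stmt_12 (p : ℝ) (hp : 1 < p)
    (a b : ℝ) (hab : a < b) (φ₁ φ₂ : ℝ → ℝ)
    (hφ₁ : ConvexOn ℝ (Icc a b) φ₁) (hφ₂ : ConcaveOn ℝ (Icc a b) φ₂)
    (hφle : ∀ x ∈ Icc a b, φ₁ x ≤ φ₂ x)
    (Ω : Set (ℝ × ℝ))
    (hΩ : Ω = {z : ℝ × ℝ | z.1 ∈ Icc a b ∧ z.2 ∈ Icc (φ₁ z.1) (φ₂ z.1)})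
    (hΩc : IsCompact Ω) (hΩint : (interior Ω).Nonempty)
    (hnotang :
      φ₁ a < φ₂ a ∨ φ₁ b < φ₂ b ∨
      (∀ C : ℝ, ∃ x ∈ Ioc a b, C < (φ₂ x - φ₂ a) / (x - a)) ∨
      (∀ C : ℝ, ∃ x ∈ Ioc a b, (φ₁ x - φ₁ a) / (x - a) < C) ∨
      (∀ C : ℝ, ∃ x ∈ Ico a b, (φ₂ b - φ₂ x) / (b - x) < C) ∨
      (∀ C : ℝ, ∃ x ∈ Ico a b, C < (φ₁ b - φ₁ x) / (b - x))) :
    ∀ C > (0 : ℝ), ∃ u : ℝ × ℝ → ℝ, MemU Ω u ∧ (∃ z ∈ Ω, u z ≠ 0) ∧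
      C * LpN Ω p (uy u) < LpN Ω p (ux u) := by
  obtain ⟨ξ, hξ⟩ := exists_isNonangularVerticalSupport hab hφle hnotang
  exact stmt_12_general hp (hΩ ▸ convex_setOf_mem_Icc_apply hφ₁ hφ₂) hΩint hΩc.measure_lt_top.ne
    (hΩ ▸ hξ)
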